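/- arXiv:2309.08332 — 3 statements merged into one kernel-verified Lean document; each statement's English description precedes it below -/
import Mathlib

section
/- For all φ₁, φ₂ ∈ [0,1), the pushforward of the product measure μ × μ on [0,1) × [0,1) under the map (u₁, u₂) ↦ (u₁, F_{φ₁}(u₁, u₂)) equals the pushforward under (u₁, u₂) ↦ (u₁, F_{φ₂}(u₁, u₂)); i.e., the joint observational distribution of (X₁, X₂) generated by the SCM X₁ = U₁, X₂ = F_φ(X₁, U₂) with U₁, U₂ independent uniform on [0,1) is the same for every parametrization φ. -/
/-!
The wrapped shift `zeta φ` preserves the uniform measure on `[0,1)`: it translates `[0, 1 - φ)` onto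
`[φ, 1)` and `[1 - φ, 1)` onto `[0, φ)` (`map_zeta_unif`). Hence for each fixed `x₁` the law of
`F φ x₁ U₂` does not depend on `φ`, and Fubini's theorem gives equality of the joint laws.
-/

open MeasureTheory

/-- The shift of `[0,1)` by `φ`, wrapped around modulo 1. -/
noncomputable def zeta (φ u : ℝ) : ℝ := if 1 ≤ u + φ then u + φ - 1 else u + φ

/-- The structural function of the SCM: `X₂ = u₂·x₁` if `x₁ < 1/2`
and `X₂ = ζ_φ(u₂)` if `x₁ ≥ 1/2`. -/
noncomputable def F (φ x₁ u₂ : ℝ) : ℝ := if x₁ < 1 / 2 then u₂ * x₁ else zeta φ u₂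

/-- The uniform probability measure on `[0,1)`. -/
noncomputable def unif : Measure ℝ := volume.restrict (Set.Ico (0 : ℝ) 1)

lemma measurable_zeta (φ : ℝ) : Measurable (zeta φ) := by
  unfold zeta
  exact Measurable.ite (measurableSet_le (by fun_prop) (by fun_prop)) (by fun_prop) (by fun_prop)

lemma map_zeta_unif {φ : ℝ} (hφ : φ ∈ Set.Ico (0 : ℝ) 1) :
    Measure.map (zeta φ) unif = unif := by
  obtain ⟨h0, h1⟩ := hφ
  ext s hs
  rw [Measure.map_apply (measurable_zeta φ) hs, unif,
    Measure.restrict_apply (measurable_zeta φ hs), Measure.restrict_apply hs]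
  have hpre : zeta φ ⁻¹' s ∩ Set.Ico 0 1 =
      (fun u => u + φ) ⁻¹' (s ∩ Set.Ico φ 1) ∪ (fun u => u + (φ - 1)) ⁻¹' (s ∩ Set.Ico 0 φ) := by
    ext u
    simp only [zeta, Set.mem_inter_iff, Set.mem_preimage, Set.mem_union, Set.mem_Ico,
      ← add_sub_assoc]
    split_ifs with h
    · constructor
      · rintro ⟨hs, _, _⟩
        exact Or.inr ⟨hs, by linarith, by linarith⟩
      · rintro (⟨_, _, _⟩ | ⟨hs, _, _⟩)
        · linarith
        · exact ⟨hs, by linarith, by linarith⟩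
    · constructor
      · rintro ⟨hs, _, _⟩
        exact Or.inl ⟨hs, by linarith, by linarith⟩
      · rintro (⟨hs, _, _⟩ | ⟨_, _, _⟩)
        · exact ⟨hs, by linarith, by linarith⟩
        · linarith
  have himg : s ∩ Set.Ico 0 1 = (s ∩ Set.Ico φ 1) ∪ (s ∩ Set.Ico 0 φ) := by
    rw [← Set.inter_union_distrib_left, Set.union_comm, Set.Ico_union_Ico_eq_Ico h0 h1.le]
  have hmeas : MeasurableSet (s ∩ Set.Ico 0 φ) := hs.inter measurableSet_Ico
  rw [hpre, himg, measure_union _ (hmeas.preimage (by fun_prop)), measure_union _ hmeas,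
    measure_preimage_add_right, measure_preimage_add_right]
  · rw [Set.disjoint_left]
    rintro u ⟨_, hu, _⟩ ⟨_, _, hu'⟩
    linarith
  · rw [Set.disjoint_left]
    rintro u ⟨_, _, hu⟩ ⟨_, hu', _⟩
    linarith

lemma measurable_F (φ : ℝ) : Measurable (fun u : ℝ × ℝ => (u.1, F φ u.1 u.2)) := by
  unfold F
  exact measurable_fst.prodMk (Measurable.ite (measurableSet_lt (by fun_prop) (by fun_prop))
    (by fun_prop) ((measurable_zeta φ).comp measurable_snd))

/-- The joint observational distribution of `(X₁, X₂)` generated by the SCM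
`X₁ = U₁`, `X₂ = F_φ(X₁, U₂)` with `U₁, U₂` independent uniform on `[0,1)` is
the same for every parametrization `φ`. -/
theorem observational_dist_indep_of_param (φ₁ φ₂ : ℝ)
    (hφ₁ : φ₁ ∈ Set.Ico (0 : ℝ) 1) (hφ₂ : φ₂ ∈ Set.Ico (0 : ℝ) 1) :
    Measure.map (fun u : ℝ × ℝ => (u.1, F φ₁ u.1 u.2)) (unif.prod unif) =
    Measure.map (fun u : ℝ × ℝ => (u.1, F φ₂ u.1 u.2)) (unif.prod unif) := by
  have : SFinite unif := by unfold unif; infer_instance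
  ext s hs
  rw [Measure.map_apply (measurable_F φ₁) hs, Measure.map_apply (measurable_F φ₂) hs,
    Measure.prod_apply (measurable_F φ₁ hs), Measure.prod_apply (measurable_F φ₂ hs)]
  refine lintegral_congr fun x => ?_
  by_cases hx : x < 1 / 2
  · simp only [Set.preimage_preimage, F, if_pos hx]
  · simp only [Set.preimage_preimage, F, if_neg hx]
    have key : ∀ φ ∈ Set.Ico (0 : ℝ) 1,
        unif ((fun y => (x, zeta φ y)) ⁻¹' s) = unif (Prod.mk x ⁻¹' s) := by
      intro φ hφ
      conv_rhs => rw [← map_zeta_unif hφ]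
      rw [Measure.map_apply (measurable_zeta φ) (measurable_prodMk_left hs)]
      rfl
    rw [key φ₁ hφ₁, key φ₂ hφ₂]
end

section
/- For every a ∈ [0,1) and every φ ∈ [0,1), the pushforward of μ under u ↦ F_φ(a, u) does not depend on φ; explicitly, it equals the uniform probability measure on [0, a) if 0 < a < 1/2 (and the Dirac measure at 0 if a = 0), and it equals the uniform probability measure on [0,1) if a ≥ 1/2. Hence every interventional distribution P(X₂ | do(X₁ = a)) of the SCM is identical across all parametrizations φ. -/
open MeasureTheory

lemma map_mul_unif {a : ℝ} (ha : 0 < a) :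
    Measure.map (fun u => u * a) unif =
      (ENNReal.ofReal a)⁻¹ • volume.restrict (Set.Ico (0 : ℝ) a) := by
  have hpre : (fun u : ℝ => u * a) ⁻¹' Set.Ico 0 a = Set.Ico 0 1 := by
    rw [Set.preimage_mul_const_Ico₀ 0 a ha, zero_div, div_self ha.ne']
  rw [unif, ← hpre, ← Measure.restrict_map (by fun_prop) measurableSet_Ico,
    Real.map_volume_mul_right ha.ne', Measure.restrict_smul, abs_of_pos (inv_pos.2 ha),
    ENNReal.ofReal_inv_of_pos ha]

/-- The interventional distribution `P(X₂ | do(X₁ = a))`, i.e. the pushforward of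
the uniform measure under `u ↦ F_φ(a, u)`, does not depend on `φ`: it is the Dirac
measure at `0` if `a = 0`, the uniform probability measure on `[0, a)` if
`0 < a < 1/2`, and the uniform probability measure on `[0,1)` if `a ≥ 1/2`. -/
theorem interventional_dist_indep_of_param (a φ : ℝ)
    (ha : a ∈ Set.Ico (0 : ℝ) 1) (hφ : φ ∈ Set.Ico (0 : ℝ) 1) :
    Measure.map (fun u => F φ a u) unif =
      if a = 0 then Measure.dirac 0
      else if a < 1 / 2 then (ENNReal.ofReal a)⁻¹ • volume.restrict (Set.Ico (0 : ℝ) a)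
      else volume.restrict (Set.Ico (0 : ℝ) 1) := by
  unfold F
  split_ifs with h1 h2 h2
  · subst h2
    simp [unif, Measure.map_const]
  · exact map_mul_unif (lt_of_le_of_ne ha.1 (Ne.symm h2))
  · subst h2
    norm_num at h1
  · exact map_zeta_unif hφ
end

section
/- Non-identifiability of counterfactuals: for all φ₁, φ₂ ∈ [0,1), (i) the observational distributions coincide: the pushforward of μ × μ under (u₁, u₂) ↦ (u₁, F_{φ₁}(u₁, u₂)) equals the pushforward under (u₁, u₂) ↦ (u₁, F_{φ₂}(u₁, u₂)); (ii) for every a ∈ [0,1) the interventional distributions coincide: the pushforward of μ under u ↦ F_{φ₁}(a, u) equals the pushforward under u ↦ F_{φ₂}(a, u); yet (iii) if φ₁ ≠ φ₂, then for every factum (x₁, x₂) with 0 < x₁ < 1/2 and 0 ≤ x₂ < x₁ and every counterfactual intervention do(X₁ = a) with a ∈ [1/2, 1), the counterfactual outcomes differ: F_{φ₁}(a, x₂/x₁) ≠ F_{φ₂}(a, x₂/x₁). -/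
/-!
The wrapped shift `zeta φ` preserves the uniform law on `[0,1)` (`map_zeta_unif`): its preimage of a
set splits into translates of the parts lying in `[φ,1)` and in `[0,φ)`. Hence the law of `F φ a U₂`
does not depend on `φ` for any fixed `a`, and integrating over `a` (Tonelli) gives the same for the
observational law. On the other hand, for a fixed noise value `u`, the shifts `zeta φ u` with
`φ ∈ [0,1)` are pairwise distinct, as they are congruent to `u + φ` modulo 1.
-/

open MeasureTheory

lemma measurable_F_uncurry (φ : ℝ) : Measurable (fun u : ℝ × ℝ => F φ u.1 u.2) := by
  unfold F
  exact Measurable.ite (measurableSet_lt (by fun_prop) (by fun_prop)) (by fun_prop)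
    ((measurable_zeta φ).comp measurable_snd)

/-- The interventional law of `X₂` under `do(X₁ = a)` does not depend on the shift. -/
lemma map_F_unif {φ₁ φ₂ : ℝ} (hφ₁ : φ₁ ∈ Set.Ico (0 : ℝ) 1) (hφ₂ : φ₂ ∈ Set.Ico (0 : ℝ) 1)
    (a : ℝ) : Measure.map (fun u => F φ₁ a u) unif = Measure.map (fun u => F φ₂ a u) unif := by
  by_cases ha : a < 1 / 2
  · simp only [F, if_pos ha]
  · simp only [F, if_neg ha]
    exact (map_zeta_unif hφ₁).trans (map_zeta_unif hφ₂).symm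

instance isFiniteMeasure_unif : IsFiniteMeasure unif := by
  unfold unif
  infer_instance

/-- The observational probability of `s` is the average over `a` of the probabilities of its sections
under the interventional laws for `do(X₁ = a)`. -/
lemma map_observational_apply (φ : ℝ) {s : Set (ℝ × ℝ)} (hs : MeasurableSet s) :
    Measure.map (fun u : ℝ × ℝ => (u.1, F φ u.1 u.2)) (unif.prod unif) s =
      ∫⁻ a, Measure.map (fun u => F φ a u) unif (Prod.mk a ⁻¹' s) ∂unif := by
  have hm : Measurable (fun u : ℝ × ℝ => (u.1, F φ u.1 u.2)) :=
    measurable_fst.prodMk (measurable_F_uncurry φ)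
  rw [Measure.map_apply hm hs, Measure.prod_apply (hm hs)]
  refine lintegral_congr fun a => ?_
  have ha : Measurable (fun u => F φ a u) :=
    (measurable_F_uncurry φ).comp (measurable_prodMk_left (x := a))
  rw [Measure.map_apply ha (measurable_prodMk_left hs)]
  rfl

/-- Non-identifiability of counterfactuals: the SCMs `M_φ` share (i) the same
observational distribution and (ii) the same interventional distributions for
every intervention `do(X₁ = a)`, and yet (iii) for distinct parametrizations and
any factum `(x₁, x₂)` with `0 < x₁ < 1/2`, `0 ≤ x₂ < x₁`, the counterfactual
outcomes under `do(X₁ = a)` with `a ∈ [1/2, 1)` differ. -/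
theorem counterfactual_nonidentifiability (φ₁ φ₂ : ℝ)
    (hφ₁ : φ₁ ∈ Set.Ico (0 : ℝ) 1) (hφ₂ : φ₂ ∈ Set.Ico (0 : ℝ) 1) :
    (Measure.map (fun u : ℝ × ℝ => (u.1, F φ₁ u.1 u.2)) (unif.prod unif) =
      Measure.map (fun u : ℝ × ℝ => (u.1, F φ₂ u.1 u.2)) (unif.prod unif)) ∧
    (∀ a ∈ Set.Ico (0 : ℝ) 1,
      Measure.map (fun u => F φ₁ a u) unif = Measure.map (fun u => F φ₂ a u) unif) ∧
    (φ₁ ≠ φ₂ → ∀ x₁ x₂ : ℝ, 0 < x₁ → x₁ < 1 / 2 → 0 ≤ x₂ → x₂ < x₁ →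
      ∀ a ∈ Set.Ico (1 / 2 : ℝ) 1, F φ₁ a (x₂ / x₁) ≠ F φ₂ a (x₂ / x₁)) := by
  refine ⟨?_, fun a _ => map_F_unif hφ₁ hφ₂ a, ?_⟩
  · ext s hs
    simp only [map_observational_apply _ hs, map_F_unif hφ₁ hφ₂]
  · rintro hne x₁ x₂ - - - - a ⟨ha, -⟩ heq
    obtain ⟨_, _⟩ := hφ₁
    obtain ⟨_, _⟩ := hφ₂
    simp only [F, if_neg (not_lt.2 ha), zeta] at heq
    -- Equal outcomes would force `φ₁ - φ₂ ∈ {-1, 0, 1}`.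
    split_ifs at heq
    · exact hne (by linarith)
    · linarith
    · linarith
    · exact hne (by linarith)
end
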